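/- arXiv:1006.3501 — 2 statements merged into one kernel-verified Lean document; each statement's English description precedes it below -/
import Mathlib

section
/- Let C be a spherical pivotal category. For all tuples S, T of signed objects of C, ω_{TS} ∘ (σ_{X_{T*}, X_{S*}} ⊗ σ_{X_S, X_T}) = ω_{ST} as maps Hom(𝟙, X_{T*} ⊗ X_{S*}) ⊗ Hom(𝟙, X_S ⊗ X_T) → End(𝟙), under the identifications X_{(ST)*} = X_{T*} ⊗ X_{S*} and X_{ST} = X_S ⊗ X_T. -/
open CategoryTheory CategoryTheory.Limits MonoidalCategory

universe v u w

/-- A pivotal category: a monoidal category in which every object is equipped with a dual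
object and with evaluation/coevaluation morphisms forming a left duality and a right
duality, such that left and right duals of morphisms coincide, the left and right
monoidal constraints coincide, and the left and right evaluations of the unit coincide. -/
class PivotalCat (C : Type u) [Category.{v} C] [MonoidalCategory C] where
  dual : C → C
  evl : ∀ X : C, dual X ⊗ X ⟶ 𝟙_ C
  coevl : ∀ X : C, 𝟙_ C ⟶ X ⊗ dual X
  evr : ∀ X : C, X ⊗ dual X ⟶ 𝟙_ C
  coevr : ∀ X : C, 𝟙_ C ⟶ dual X ⊗ X
  left_zigzag₁ : ∀ X : C,
    (λ_ X).inv ≫ (coevl X ▷ X) ≫ (α_ X (dual X) X).hom ≫ (X ◁ evl X) ≫ (ρ_ X).hom = 𝟙 X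
  left_zigzag₂ : ∀ X : C,
    (ρ_ (dual X)).inv ≫ (dual X ◁ coevl X) ≫ (α_ (dual X) X (dual X)).inv ≫
      (evl X ▷ dual X) ≫ (λ_ (dual X)).hom = 𝟙 (dual X)
  right_zigzag₁ : ∀ X : C,
    (ρ_ X).inv ≫ (X ◁ coevr X) ≫ (α_ X (dual X) X).inv ≫ (evr X ▷ X) ≫ (λ_ X).hom = 𝟙 X
  right_zigzag₂ : ∀ X : C,
    (λ_ (dual X)).inv ≫ (coevr X ▷ dual X) ≫ (α_ (dual X) X (dual X)).hom ≫
      (dual X ◁ evr X) ≫ (ρ_ (dual X)).hom = 𝟙 (dual X)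
  ldual_eq_rdual : ∀ {X Y : C} (f : X ⟶ Y),
    (ρ_ (dual Y)).inv ≫ (dual Y ◁ coevl X) ≫ (dual Y ◁ (f ▷ dual X)) ≫
      (α_ (dual Y) Y (dual X)).inv ≫ (evl Y ▷ dual X) ≫ (λ_ (dual X)).hom =
    (λ_ (dual Y)).inv ≫ (coevr X ▷ dual Y) ≫ ((dual X ◁ f) ▷ dual Y) ≫
      (α_ (dual X) Y (dual Y)).hom ≫ (dual X ◁ evr Y) ≫ (ρ_ (dual X)).hom
  constraint_eq : ∀ X Y : C,
    (ρ_ (dual X ⊗ dual Y)).inv ≫ ((dual X ⊗ dual Y) ◁ coevl (Y ⊗ X)) ≫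
      (α_ (dual X) (dual Y) ((Y ⊗ X) ⊗ dual (Y ⊗ X))).hom ≫
      (dual X ◁ (α_ (dual Y) (Y ⊗ X) (dual (Y ⊗ X))).inv) ≫
      (dual X ◁ (((α_ (dual Y) Y X).inv ≫ (evl Y ▷ X) ≫ (λ_ X).hom) ▷ dual (Y ⊗ X))) ≫
      (α_ (dual X) X (dual (Y ⊗ X))).inv ≫ (evl X ▷ dual (Y ⊗ X)) ≫ (λ_ (dual (Y ⊗ X))).hom =
    (λ_ (dual X ⊗ dual Y)).inv ≫ (coevr (Y ⊗ X) ▷ (dual X ⊗ dual Y)) ≫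
      (α_ (dual (Y ⊗ X)) (Y ⊗ X) (dual X ⊗ dual Y)).hom ≫
      (dual (Y ⊗ X) ◁ ((α_ Y X (dual X ⊗ dual Y)).hom ≫ (Y ◁ (α_ X (dual X) (dual Y)).inv) ≫
        (Y ◁ (evr X ▷ dual Y)) ≫ (Y ◁ (λ_ (dual Y)).hom) ≫ evr Y)) ≫
      (ρ_ (dual (Y ⊗ X))).hom
  ev_unit : (ρ_ (dual (𝟙_ C))).inv ≫ evl (𝟙_ C) = (λ_ (dual (𝟙_ C))).inv ≫ evr (𝟙_ C)

namespace PivotalCat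

variable {C : Type u} [Category.{v} C] [MonoidalCategory C] [PivotalCat C]

/-- The (common left = right) dual of a morphism. -/
def pdual {X Y : C} (f : X ⟶ Y) : dual Y ⟶ dual X :=
  (ρ_ (dual Y)).inv ≫ (dual Y ◁ coevl X) ≫ (dual Y ◁ (f ▷ dual X)) ≫
    (α_ (dual Y) Y (dual X)).inv ≫ (evl Y ▷ dual X) ≫ (λ_ (dual X)).hom

/-- The (common left = right) pivotal monoidal constraint `X* ⊗ Y* ⟶ (Y ⊗ X)*`. -/
def mcon (X Y : C) : dual X ⊗ dual Y ⟶ dual (Y ⊗ X) :=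
  (ρ_ (dual X ⊗ dual Y)).inv ≫ ((dual X ⊗ dual Y) ◁ coevl (Y ⊗ X)) ≫
    (α_ (dual X) (dual Y) ((Y ⊗ X) ⊗ dual (Y ⊗ X))).hom ≫
    (dual X ◁ (α_ (dual Y) (Y ⊗ X) (dual (Y ⊗ X))).inv) ≫
    (dual X ◁ (((α_ (dual Y) Y X).inv ≫ (evl Y ▷ X) ≫ (λ_ X).hom) ▷ dual (Y ⊗ X))) ≫
    (α_ (dual X) X (dual (Y ⊗ X))).inv ≫ (evl X ▷ dual (Y ⊗ X)) ≫ (λ_ (dual (Y ⊗ X))).hom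

/-- The left trace of an endomorphism. -/
def trl {X : C} (f : X ⟶ X) : 𝟙_ C ⟶ 𝟙_ C := coevr X ≫ (dual X ◁ f) ≫ evl X

/-- The right trace of an endomorphism. -/
def trr {X : C} (f : X ⟶ X) : 𝟙_ C ⟶ 𝟙_ C := coevl X ≫ (f ▷ dual X) ≫ evr X

/-- The left dimension of an object, as an endomorphism of the unit. -/
def diml (X : C) : 𝟙_ C ⟶ 𝟙_ C := trl (𝟙 X)

/-- The right dimension of an object, as an endomorphism of the unit. -/
def dimr (X : C) : 𝟙_ C ⟶ 𝟙_ C := trr (𝟙 X)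

/-- The permutation map `σ_{X,Y} : Hom(𝟙, X ⊗ Y) → Hom(𝟙, Y ⊗ X)`,
`α ↦ (ev_l X ⊗ id_{Y⊗X}) ∘ (id_{X*} ⊗ α ⊗ id_X) ∘ coev_r X`. -/
def sigmaMap (X Y : C) (a : 𝟙_ C ⟶ X ⊗ Y) : 𝟙_ C ⟶ Y ⊗ X :=
  coevr X ≫ (dual X ◁ (λ_ X).inv) ≫ (dual X ◁ (a ▷ X)) ≫ (dual X ◁ (α_ X Y X).hom) ≫
    (α_ (dual X) X (Y ⊗ X)).inv ≫ (evl X ▷ (Y ⊗ X)) ≫ (λ_ (Y ⊗ X)).hom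

end PivotalCat

/-- A pivotal category is spherical when left and right traces coincide. -/
class SphericalCat (C : Type u) [Category.{v} C] [MonoidalCategory C] [PivotalCat C] : Prop where
  tr_eq : ∀ {X : C} (f : X ⟶ X), PivotalCat.trl f = PivotalCat.trr f

namespace PivotalCat

variable {C : Type u} [Category.{v} C] [MonoidalCategory C] [PivotalCat C]

/-- The object `X^ε` associated with a signed object `(X, ε)`:
`X^+ = X` and `X^- = X*`. -/
def sobj : C × Bool → C
  | (X, true) => X
  | (X, false) => dual X

/-- The sign-flip `(X, ε) ↦ (X, -ε)` on signed objects. -/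
def flipSign : C × Bool → C × Bool
  | (X, b) => (X, !b)

/-- The dual tuple `S* = ((X_n, -ε_n), …, (X_1, -ε_1))` of a tuple
`S = ((X_1, ε_1), …, (X_n, ε_n))` of signed objects. -/
def Sstar (S : List (C × Bool)) : List (C × Bool) := (S.map flipSign).reverse

/-- The object `X_S = X_1^{ε_1} ⊗ ⋯ ⊗ X_n^{ε_n}` of a tuple of signed objects. -/
def XS : List (C × Bool) → C
  | [] => 𝟙_ C
  | P :: T => sobj P ⊗ XS T

theorem Sstar_cons (P : C × Bool) (T : List (C × Bool)) :
    Sstar (P :: T) = Sstar T ++ [flipSign P] := by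
  simp [Sstar]

theorem Sstar_append (S T : List (C × Bool)) :
    Sstar (S ++ T) = Sstar T ++ Sstar S := by
  simp [Sstar]

/-- The identification `X_{AB} = X_A ⊗ X_B` for concatenated tuples. -/
def splitIso : (A B : List (C × Bool)) → (XS (A ++ B) ≅ XS A ⊗ XS B)
  | [], B => (λ_ (XS B)).symm
  | P :: A, B => whiskerLeftIso (sobj P) (splitIso A B) ≪≫ (α_ (sobj P) (XS A) (XS B)).symm

/-- The elementary evaluation `Ev_{(X,+)} = ev_l X`, `Ev_{(X,-)} = ev_r X`. -/
def ev1 : (P : C × Bool) → (sobj (flipSign P) ⊗ sobj P ⟶ 𝟙_ C)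
  | (X, true) => evl X
  | (X, false) => evr X

/-- The evaluation morphism `Ev_S : X_{S*} ⊗ X_S ⟶ 𝟙`, defined recursively by
`Ev_{(X,+)} = ev_l X`, `Ev_{(X,-)} = ev_r X`, and
`Ev_{ST} = Ev_T ∘ (id_{X_{T*}} ⊗ Ev_S ⊗ id_{X_T})`. -/
def EvS : (S : List (C × Bool)) → (XS (Sstar S) ⊗ XS S ⟶ 𝟙_ C)
  | [] => (λ_ (𝟙_ C)).hom
  | P :: T =>
    ((eqToHom (congrArg XS (Sstar_cons P T)) ≫ (splitIso (Sstar T) [flipSign P]).hom ≫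
        (XS (Sstar T) ◁ (ρ_ (sobj (flipSign P))).hom)) ▷ (sobj P ⊗ XS T)) ≫
      (α_ (XS (Sstar T)) (sobj (flipSign P)) (sobj P ⊗ XS T)).hom ≫
      (XS (Sstar T) ◁ (α_ (sobj (flipSign P)) (sobj P) (XS T)).inv) ≫
      (XS (Sstar T) ◁ (ev1 P ▷ XS T)) ≫
      (XS (Sstar T) ◁ (λ_ (XS T)).hom) ≫
      EvS T

/-- The evaluation form `ω_S(α ⊗ β) = Ev_S ∘ (α ⊗ β) ∈ End(𝟙)`. -/
def omegaS (S : List (C × Bool)) (a : 𝟙_ C ⟶ XS (Sstar S)) (b : 𝟙_ C ⟶ XS S) :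
    𝟙_ C ⟶ 𝟙_ C :=
  (λ_ (𝟙_ C)).inv ≫ (a ⊗ₘ b) ≫ EvS S

end PivotalCat

/-!
A pairing `c : X ⊗ Y ⟶ 𝟙` transposes along `coev_r` to a morphism `Y ⟶ X*`, and transposing back
along `ev_l` gives its flip `Y ⊗ X ⟶ 𝟙`. Since left and right duals of morphisms coincide,
contracting `σ b` on the left leaves the same morphism as contracting `b` on the right with a
flipped pairing. Since left and right traces coincide, composing `σ a` with a flipped pairing is
the same as composing `a` with the pairing itself. As `Ev_{ST}` is `Ev_S` nested inside `Ev_T`,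
the first fact trades `σ b` for `b` at the price of flipping `Ev_T`, and the second one then trades
`σ a` for `a` and removes that flip.
-/

namespace PivotalCat

section Pairings

variable {C : Type u} [Category.{v} C] [MonoidalCategory C]

/-- The contraction of the left leg of `u` against a pairing: `(c ⊗ id_B)(id_Z ⊗ u)`. With
`u = coev_l` this is the transposition of pairings into morphisms to the dual. -/
def contractLeft {A B Z : C} (u : 𝟙_ C ⟶ A ⊗ B) (c : Z ⊗ A ⟶ 𝟙_ C) : Z ⟶ B :=
  (ρ_ Z).inv ≫ Z ◁ u ≫ (α_ Z A B).inv ≫ c ▷ B ≫ (λ_ B).hom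

/-- The contraction of the right leg of `u` against a pairing: `(id_A ⊗ c)(u ⊗ id_Z)`. With
`u = coev_r` this is the transposition of pairings into morphisms to the dual. -/
def contractRight {A B Z : C} (u : 𝟙_ C ⟶ A ⊗ B) (c : B ⊗ Z ⟶ 𝟙_ C) : Z ⟶ A :=
  (λ_ Z).inv ≫ u ▷ Z ≫ (α_ A B Z).hom ≫ A ◁ c ≫ (ρ_ A).hom

/-- The nested pairing `d(id_{Y'} ⊗ e ⊗ id_Y)`, through which `Ev_{ST}` is built from
`Ev_S` and `Ev_T`. -/
def nestPairing {X X' Y Y' : C} (e : X' ⊗ X ⟶ 𝟙_ C) (d : Y' ⊗ Y ⟶ 𝟙_ C) :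
    (Y' ⊗ X') ⊗ (X ⊗ Y) ⟶ 𝟙_ C :=
  (α_ Y' X' (X ⊗ Y)).hom ≫ Y' ◁ (α_ X' X Y).inv ≫ Y' ◁ e ▷ Y ≫ Y' ◁ (λ_ Y).hom ≫ d

theorem contractLeft_whiskerRight_comp {A B Z W : C} (u : 𝟙_ C ⟶ A ⊗ B) (f : W ⟶ Z)
    (c : Z ⊗ A ⟶ 𝟙_ C) : contractLeft u (f ▷ A ≫ c) = f ≫ contractLeft u c := by
  unfold contractLeft
  calc _ = 𝟙 _ ⊗≫ (W ◁ u ≫ f ▷ (A ⊗ B)) ⊗≫ c ▷ B ⊗≫ 𝟙 _ := by monoidal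
    _ = _ := by rw [whisker_exchange]; monoidal

theorem contractRight_whiskerLeft_comp {A B Z W : C} (u : 𝟙_ C ⟶ A ⊗ B) (f : W ⟶ Z)
    (c : B ⊗ Z ⟶ 𝟙_ C) : contractRight u (B ◁ f ≫ c) = f ≫ contractRight u c := by
  unfold contractRight
  calc _ = 𝟙 _ ⊗≫ (u ▷ W ≫ (A ⊗ B) ◁ f) ⊗≫ A ◁ c ⊗≫ 𝟙 _ := by monoidal
    _ = _ := by rw [← whisker_exchange]; monoidal

theorem contractLeft_comp_whiskerRight {A A' B Z : C} (u : 𝟙_ C ⟶ A ⊗ B) (f : A ⟶ A')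
    (c : Z ⊗ A' ⟶ 𝟙_ C) : contractLeft (u ≫ f ▷ B) c = contractLeft u (Z ◁ f ≫ c) := by
  unfold contractLeft
  monoidal

theorem contractLeft_whiskerRight_comp_pairing {A B D Z : C} (u : 𝟙_ C ⟶ A ⊗ B)
    (g : D ⊗ A ⟶ 𝟙_ C) (c : B ⊗ Z ⟶ 𝟙_ C) :
    contractLeft u g ▷ Z ≫ c = D ◁ contractRight u c ≫ g := by
  unfold contractLeft contractRight
  calc _ = 𝟙 _ ⊗≫ D ◁ u ▷ Z ⊗≫ (g ▷ (B ⊗ Z) ≫ 𝟙_ C ◁ c) ⊗≫ 𝟙 _ := by monoidal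
    _ = _ := by rw [← whisker_exchange]; monoidal

theorem comp_whiskerLeft_contractLeft {A B Z W : C} (u : 𝟙_ C ⟶ A ⊗ B) (c : B ⊗ Z ⟶ 𝟙_ C)
    (v : 𝟙_ C ⟶ Z ⊗ W) : u ≫ A ◁ contractLeft v c = v ≫ contractRight u c ▷ W := by
  unfold contractLeft contractRight
  calc _ = 𝟙 _ ⊗≫ (u ▷ 𝟙_ C ≫ (A ⊗ B) ◁ v) ⊗≫ A ◁ c ▷ W ⊗≫ 𝟙 _ := by monoidal
    _ = _ := by rw [← whisker_exchange]; monoidal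

theorem tensorHom_comp_nestPairing {X X' Y Y' : C} (e : X' ⊗ X ⟶ 𝟙_ C) (d : Y' ⊗ Y ⟶ 𝟙_ C)
    (a : 𝟙_ C ⟶ Y' ⊗ X') (b : 𝟙_ C ⟶ X ⊗ Y) :
    (λ_ (𝟙_ C)).inv ≫ (a ⊗ₘ b) ≫ nestPairing e d = a ≫ Y' ◁ contractLeft b e ≫ d := by
  unfold nestPairing contractLeft
  rw [MonoidalCategory.tensorHom_def]
  monoidal

theorem nestPairing_tensorHom_comp_left {X X' Y Y' Z Z' : C} (e : X' ⊗ X ⟶ 𝟙_ C)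
    (d : Y' ⊗ Y ⟶ 𝟙_ C) (f' : Z' ⟶ X') (f : Z ⟶ X) :
    nestPairing ((f' ⊗ₘ f) ≫ e) d = (Y' ◁ f' ⊗ₘ f ▷ Y) ≫ nestPairing e d := by
  unfold nestPairing
  rw [MonoidalCategory.tensorHom_def, MonoidalCategory.tensorHom_def]
  monoidal

theorem nestPairing_tensorHom_comp_right {X X' Y Y' W W' : C} (e : X' ⊗ X ⟶ 𝟙_ C)
    (d : Y' ⊗ Y ⟶ 𝟙_ C) (g' : W' ⟶ Y') (g : W ⟶ Y) :
    nestPairing e ((g' ⊗ₘ g) ≫ d) = (g' ▷ X' ⊗ₘ X ◁ g) ≫ nestPairing e d := by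
  unfold nestPairing
  calc _ = 𝟙 _ ⊗≫ W' ◁ (e ▷ W ≫ 𝟙_ C ◁ g) ⊗≫ g' ▷ Y ≫ d := by
        rw [MonoidalCategory.tensorHom_def']; monoidal
    _ = 𝟙 _ ⊗≫ W' ◁ (X' ⊗ X) ◁ g ⊗≫ (W' ◁ (e ▷ Y ≫ (λ_ Y).hom) ≫ g' ▷ Y) ≫ d := by
        rw [← whisker_exchange e g]; monoidal
    _ = _ := by
        rw [whisker_exchange, MonoidalCategory.tensorHom_def']; monoidal

theorem tensorHom_comp_nestPairing_leftUnitor {Y Y' : C} (d : Y' ⊗ Y ⟶ 𝟙_ C) :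
    ((ρ_ Y').inv ⊗ₘ (λ_ Y).inv) ≫ nestPairing (λ_ (𝟙_ C)).hom d = d := by
  unfold nestPairing
  monoidal

theorem nestPairing_assoc {P P' S S' T T' : C} (p : P' ⊗ P ⟶ 𝟙_ C) (s : S' ⊗ S ⟶ 𝟙_ C)
    (t : T' ⊗ T ⟶ 𝟙_ C) :
    nestPairing p (nestPairing s t) =
      ((α_ T' S' P').hom ⊗ₘ (α_ P S T).inv) ≫ nestPairing (nestPairing p s) t := by
  unfold nestPairing
  monoidal

theorem leftUnitor_inv_comp_inv_whiskerRight {X : C} (i : X ≅ 𝟙_ C) :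
    (λ_ X).inv ≫ i.inv ▷ X = (ρ_ X).inv ≫ X ◁ i.inv := by
  rw [← cancel_epi i.inv, leftUnitor_inv_naturality_assoc, rightUnitor_inv_naturality_assoc,
    whisker_exchange, unitors_inv_equal]

end Pairings

theorem Sstar_nil {C : Type u} : Sstar ([] : List (C × Bool)) = [] :=
  rfl

variable {C : Type u} [Category.{v} C] [MonoidalCategory C] [PivotalCat C]

theorem contractLeft_coevl_whiskerRight_evl {Z W : C} (f : W ⟶ dual Z) :
    contractLeft (coevl Z) (f ▷ Z ≫ evl Z) = f := by
  rw [contractLeft_whiskerRight_comp]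
  exact (congrArg (f ≫ ·) (left_zigzag₂ Z)).trans (Category.comp_id f)

theorem contractLeft_coevr_whiskerRight_evr {Z W : C} (f : W ⟶ Z) :
    contractLeft (coevr Z) (f ▷ dual Z ≫ evr Z) = f := by
  rw [contractLeft_whiskerRight_comp]
  exact (congrArg (f ≫ ·) (right_zigzag₁ Z)).trans (Category.comp_id f)

theorem contractLeft_coevl_whiskerRight_comp_evl {Z W : C} (g : W ⊗ Z ⟶ 𝟙_ C) :
    contractLeft (coevl Z) g ▷ Z ≫ evl Z = g := by
  have zigzag : contractRight (coevl Z) (evl Z) = 𝟙 Z := left_zigzag₁ Z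
  rw [contractLeft_whiskerRight_comp_pairing, zigzag, MonoidalCategory.whiskerLeft_id,
    Category.id_comp]

theorem whiskerLeft_contractRight_coevr_comp_evr {Z W : C} (g : Z ⊗ W ⟶ 𝟙_ C) :
    Z ◁ contractRight (coevr Z) g ≫ evr Z = g := by
  have zigzag : contractLeft (coevr Z) (evr Z) = 𝟙 Z := right_zigzag₁ Z
  rw [← contractLeft_whiskerRight_comp_pairing, zigzag, id_whiskerRight, Category.id_comp]

/-- The pairing `Y ⊗ X ⟶ 𝟙` with the same transpose `Y ⟶ X*` as `c`, where `c` is transposed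
by the right duality and its flip by the left one. -/
def flipPairing {X Y : C} (c : X ⊗ Y ⟶ 𝟙_ C) : Y ⊗ X ⟶ 𝟙_ C :=
  contractRight (coevr X) c ▷ X ≫ evl X

theorem contractLeft_coevl_flipPairing {X Y : C} (c : X ⊗ Y ⟶ 𝟙_ C) :
    contractLeft (coevl X) (flipPairing c) = contractRight (coevr X) c :=
  contractLeft_coevl_whiskerRight_evl _

theorem flipPairing_injective {X Y : C} :
    Function.Injective (flipPairing : (X ⊗ Y ⟶ 𝟙_ C) → (Y ⊗ X ⟶ 𝟙_ C)) := by
  intro c c' h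
  rw [← whiskerLeft_contractRight_coevr_comp_evr c, ← contractLeft_coevl_flipPairing, h,
    contractLeft_coevl_flipPairing, whiskerLeft_contractRight_coevr_comp_evr]

theorem flipPairing_whiskerLeft_comp {X Y Z : C} (f : Z ⟶ Y) (c : X ⊗ Y ⟶ 𝟙_ C) :
    flipPairing (X ◁ f ≫ c) = f ▷ X ≫ flipPairing c := by
  rw [flipPairing, contractRight_whiskerLeft_comp, comp_whiskerRight, Category.assoc, flipPairing]

theorem flipPairing_whiskerRight_comp_evr {X Z : C} (f : Z ⟶ X) :
    flipPairing (f ▷ dual X ≫ evr X) = dual X ◁ f ≫ evl X := by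
  have dual_eq : contractRight (coevr Z) (f ▷ dual X ≫ evr X) =
      contractLeft (coevl Z) (dual X ◁ f ≫ evl X) := by
    unfold contractLeft contractRight
    calc _ = _ := by monoidal
      _ = _ := (ldual_eq_rdual f).symm
      _ = _ := by monoidal
  rw [flipPairing, dual_eq, contractLeft_coevl_whiskerRight_comp_evl]

theorem sigmaMap_eq_coevr_comp {X Y : C} (b : 𝟙_ C ⟶ X ⊗ Y) :
    sigmaMap X Y b = coevr X ≫ contractLeft b (evl X) ▷ X := by
  unfold sigmaMap contractLeft
  monoidal

theorem contractLeft_sigmaMap {X Y Z : C} (b : 𝟙_ C ⟶ X ⊗ Y) (d : Z ⊗ Y ⟶ 𝟙_ C) :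
    contractLeft (sigmaMap X Y b) d = contractRight b (flipPairing d) := by
  have pairing_eq :
      Z ◁ contractLeft b (evl X) ≫ d = contractRight b (flipPairing d) ▷ dual X ≫ evr X := by
    apply flipPairing_injective
    rw [flipPairing_whiskerLeft_comp, flipPairing_whiskerRight_comp_evr,
      contractLeft_whiskerRight_comp_pairing]
  rw [sigmaMap_eq_coevr_comp, contractLeft_comp_whiskerRight, pairing_eq,
    contractLeft_coevr_whiskerRight_evr]

theorem sigmaMap_comp_eq_trl {X Y : C} (b : 𝟙_ C ⟶ X ⊗ Y) (c : Y ⊗ X ⟶ 𝟙_ C) :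
    sigmaMap X Y b ≫ c = trl (contractRight b c) := by
  rw [sigmaMap_eq_coevr_comp, Category.assoc, contractLeft_whiskerRight_comp_pairing, trl]

theorem trr_contractRight {X Y : C} (b : 𝟙_ C ⟶ X ⊗ Y) (c : Y ⊗ X ⟶ 𝟙_ C) :
    trr (contractRight b c) = b ≫ X ◁ contractLeft (coevl X) c ≫ evr X := by
  rw [trr, ← Category.assoc, ← comp_whiskerLeft_contractLeft, Category.assoc]

theorem sigmaMap_comp_flipPairing [SphericalCat C] {X Y : C} (b : 𝟙_ C ⟶ X ⊗ Y)
    (c : X ⊗ Y ⟶ 𝟙_ C) : sigmaMap X Y b ≫ flipPairing c = b ≫ c := by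
  rw [sigmaMap_comp_eq_trl, SphericalCat.tr_eq, trr_contractRight,
    contractLeft_coevl_flipPairing, whiskerLeft_contractRight_coevr_comp_evr]

theorem sigmaMap_tensorHom_comp_nestPairing [SphericalCat C] {X X' Y Y' : C}
    (e : X' ⊗ X ⟶ 𝟙_ C) (d : Y' ⊗ Y ⟶ 𝟙_ C) (a : 𝟙_ C ⟶ Y' ⊗ X') (b : 𝟙_ C ⟶ X ⊗ Y) :
    (λ_ (𝟙_ C)).inv ≫ (sigmaMap Y' X' a ⊗ₘ sigmaMap X Y b) ≫ nestPairing d e =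
      (λ_ (𝟙_ C)).inv ≫ (a ⊗ₘ b) ≫ nestPairing e d := by
  calc _ = sigmaMap Y' X' a ≫ X' ◁ contractLeft (sigmaMap X Y b) d ≫ e :=
        tensorHom_comp_nestPairing d e _ _
    _ = sigmaMap Y' X' a ≫ contractLeft b e ▷ Y' ≫ flipPairing d := by
        rw [contractLeft_sigmaMap, contractLeft_whiskerRight_comp_pairing]
    _ = a ≫ Y' ◁ contractLeft b e ≫ d := by
        rw [← flipPairing_whiskerLeft_comp, sigmaMap_comp_flipPairing]
    _ = _ := (tensorHom_comp_nestPairing e d a b).symm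

/-- The identification of `X_S` with `𝟙` for the empty tuple `S`. Both sides unfold to the same
object; the named isomorphism keeps terms well typed without unfolding `XS`. -/
def nilIso : XS ([] : List (C × Bool)) ≅ 𝟙_ C :=
  Iso.refl _

/-- The identification `X_{PT} = X_P ⊗ X_T` for a signed object `P` and a tuple `T`, named for the
same reason as `nilIso`. -/
def consIso (P : C × Bool) (T : List (C × Bool)) : XS (P :: T) ≅ sobj P ⊗ XS T :=
  Iso.refl _

theorem eqToHom_comp_consIso_hom (P : C × Bool) {A B : List (C × Bool)} (h : A = B) :
    eqToHom (congrArg (fun L => XS (P :: L)) h) ≫ (consIso P B).hom =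
      (consIso P A).hom ≫ sobj P ◁ eqToHom (congrArg XS h) := by
  subst h
  simp

theorem splitIso_nil_hom (B : List (C × Bool)) :
    (splitIso [] B).hom = (λ_ (XS B)).inv ≫ nilIso.inv ▷ XS B :=
  (whisker_eq _ (id_whiskerRight (𝟙_ C) (XS B))).trans (Category.comp_id _) |>.symm

theorem splitIso_cons_hom (P : C × Bool) (A B : List (C × Bool)) :
    (splitIso (P :: A) B).hom = (consIso P (A ++ B)).hom ≫ sobj P ◁ (splitIso A B).hom ≫
      (α_ (sobj P) (XS A) (XS B)).inv ≫ (consIso P A).inv ▷ XS B := by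
  have whiskered_id : (consIso P A).inv ▷ XS B = 𝟙 _ := id_whiskerRight (sobj P ⊗ XS A) (XS B)
  rw [whiskered_id]
  exact (Category.id_comp _).trans (whisker_eq _ (Category.comp_id _)) |>.symm

theorem splitIso_nil_right_hom (A : List (C × Bool)) :
    (splitIso A []).hom = eqToHom (congrArg XS (List.append_nil A)) ≫ (ρ_ (XS A)).inv ≫
      XS A ◁ nilIso.inv := by
  induction A with
  | nil =>
    rw [splitIso_nil_hom, leftUnitor_inv_comp_inv_whiskerRight, eqToHom_refl, Category.id_comp]
  | cons P A ih =>
    calc _ = (consIso P (A ++ [])).hom ≫ sobj P ◁ eqToHom (congrArg XS (List.append_nil A)) ≫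
          (ρ_ (sobj P ⊗ XS A)).inv ≫ (sobj P ⊗ XS A) ◁ nilIso.inv ≫ (consIso P A).inv ▷ XS [] := by
          rw [splitIso_cons_hom, ih]; simp
      _ = _ := by
          rw [whisker_exchange, ← rightUnitor_inv_naturality_assoc,
            ← reassoc_of% eqToHom_comp_consIso_hom P (List.append_nil A), Iso.hom_inv_id_assoc]

theorem splitIso_assoc (A B D : List (C × Bool)) :
    (splitIso (A ++ B) D).hom ≫ (splitIso A B).hom ▷ XS D ≫ (α_ (XS A) (XS B) (XS D)).hom =
      eqToHom (congrArg XS (List.append_assoc A B D)) ≫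
        (splitIso A (B ++ D)).hom ≫ XS A ◁ (splitIso B D).hom := by
  induction A with
  | nil =>
    calc _ = (splitIso B D).hom ≫ (λ_ (XS B ⊗ XS D)).inv ≫ nilIso.inv ▷ (XS B ⊗ XS D) := by
          rw [splitIso_nil_hom]; simp
      _ = _ := by
          rw [splitIso_nil_hom, eqToHom_refl, Category.id_comp, Category.assoc, ← whisker_exchange,
            leftUnitor_inv_naturality_assoc]
  | cons P A ih =>
    have split_cons : (splitIso (P :: A ++ B) D).hom = _ := splitIso_cons_hom P (A ++ B) D
    calc _ = (consIso P (A ++ B ++ D)).hom ≫ sobj P ◁ ((splitIso (A ++ B) D).hom ≫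
            (splitIso A B).hom ▷ XS D ≫ (α_ (XS A) (XS B) (XS D)).hom) ≫
          (α_ (sobj P) (XS A) (XS B ⊗ XS D)).inv ≫ (consIso P A).inv ▷ (XS B ⊗ XS D) := by
          rw [split_cons, splitIso_cons_hom]; simp
      _ = eqToHom (congrArg XS (List.append_assoc (P :: A) B D)) ≫
          (consIso P (A ++ (B ++ D))).hom ≫ sobj P ◁ (splitIso A (B ++ D)).hom ≫
          (α_ (sobj P) (XS A) (XS (B ++ D))).inv ≫ ((sobj P ⊗ XS A) ◁ (splitIso B D).hom ≫
            (consIso P A).inv ▷ (XS B ⊗ XS D)) := by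
          rw [ih, MonoidalCategory.whiskerLeft_comp, Category.assoc,
            ← reassoc_of% eqToHom_comp_consIso_hom P (List.append_assoc A B D)]
          simp
      _ = _ := by
          rw [whisker_exchange, splitIso_cons_hom]; simp

/-- The identification of `X_S` with `X_p` for the one-term tuple `S = (p)`; the tuple object is
encoded as `X_p ⊗ 𝟙`. -/
def singletonIso (p : C × Bool) : XS [p] ≅ sobj p :=
  ρ_ (sobj p)

/-- The identification `X_{Ap} = X_A ⊗ X_p` for a tuple extended by one signed object `p`. -/
def snocIso (A : List (C × Bool)) (p : C × Bool) : XS (A ++ [p]) ≅ XS A ⊗ sobj p :=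
  splitIso A [p] ≪≫ whiskerLeftIso (XS A) (singletonIso p)

theorem snocIso_append (A B : List (C × Bool)) (p : C × Bool) :
    (snocIso (A ++ B) p).hom ≫ (splitIso A B).hom ▷ sobj p ≫ (α_ (XS A) (XS B) (sobj p)).hom =
      eqToHom (congrArg XS (List.append_assoc A B [p])) ≫
        (splitIso A (B ++ [p])).hom ≫ XS A ◁ (snocIso B p).hom := by
  simp only [snocIso, Iso.trans_hom, whiskerLeftIso_hom, Category.assoc]
  rw [whisker_exchange_assoc, tensor_whiskerLeft, MonoidalCategory.whiskerLeft_comp]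
  simp only [Category.assoc, Iso.inv_hom_id, Category.comp_id]
  rw [reassoc_of% splitIso_assoc A B [p]]

theorem eqToHom_comp_snocIso_hom {A A' : List (C × Bool)} (h : A = A') (p : C × Bool) :
    eqToHom (congrArg (fun L => XS (L ++ [p])) h) ≫ (snocIso A' p).hom =
      (snocIso A p).hom ≫ eqToHom (congrArg XS h) ▷ sobj p := by
  subst h
  simp

theorem eqToHom_comp_splitIso_hom (A : List (C × Bool)) {B B' : List (C × Bool)} (h : B = B') :
    eqToHom (congrArg (fun L => XS (A ++ L)) h) ≫ (splitIso A B').hom =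
      (splitIso A B).hom ≫ XS A ◁ eqToHom (congrArg XS h) := by
  subst h
  simp

/-- The identification of `X_{S*}` with `𝟙` for the empty tuple `S`. -/
def dualNilIso : XS (Sstar ([] : List (C × Bool))) ≅ 𝟙_ C :=
  eqToIso (congrArg XS Sstar_nil) ≪≫ nilIso

/-- The identification `X_{(PT)*} = X_{T*} ⊗ X_P^*` for a signed object `P` and a tuple `T`. -/
def dualConsIso (P : C × Bool) (T : List (C × Bool)) :
    XS (Sstar (P :: T)) ≅ XS (Sstar T) ⊗ sobj (flipSign P) :=
  eqToIso (congrArg XS (Sstar_cons P T)) ≪≫ snocIso (Sstar T) (flipSign P)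

/-- The identification `X_{(ST)*} = X_{T*} ⊗ X_{S*}`. -/
def dualSplitIso (S T : List (C × Bool)) :
    XS (Sstar (S ++ T)) ≅ XS (Sstar T) ⊗ XS (Sstar S) :=
  eqToIso (congrArg XS (Sstar_append S T)) ≪≫ splitIso (Sstar T) (Sstar S)

theorem dualConsIso_append (P : C × Bool) (S T : List (C × Bool)) :
    (dualConsIso P (S ++ T)).hom ≫ (dualSplitIso S T).hom ▷ sobj (flipSign P) ≫
        (α_ (XS (Sstar T)) (XS (Sstar S)) (sobj (flipSign P))).hom =
      (dualSplitIso (P :: S) T).hom ≫ XS (Sstar T) ◁ (dualConsIso P S).hom := by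
  simp only [dualConsIso, dualSplitIso, Iso.trans_hom, eqToIso.hom, comp_whiskerRight,
    MonoidalCategory.whiskerLeft_comp, Category.assoc]
  rw [← reassoc_of% eqToHom_comp_snocIso_hom (Sstar_append S T), snocIso_append,
    ← reassoc_of% eqToHom_comp_splitIso_hom (Sstar T) (Sstar_cons P S)]
  simp only [eqToHom_trans_assoc]

theorem dualSplitIso_nil_hom (T : List (C × Bool)) :
    (dualSplitIso [] T).hom = (ρ_ (XS (Sstar T))).inv ≫ XS (Sstar T) ◁ dualNilIso.inv := by
  rw [← cancel_mono (XS (Sstar T) ◁ eqToHom (congrArg XS Sstar_nil))]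
  simp only [dualSplitIso, dualNilIso, Iso.trans_hom, Iso.trans_inv, eqToIso.hom, eqToIso.inv,
    Category.assoc]
  rw [← eqToHom_comp_splitIso_hom (Sstar T) Sstar_nil, splitIso_nil_right_hom]
  simp

theorem EvS_nil :
    EvS ([] : List (C × Bool)) = (dualNilIso.hom ⊗ₘ nilIso.hom) ≫ (λ_ (𝟙_ C)).hom := by
  have dual_nil : dualNilIso.hom = 𝟙 (𝟙_ C) := Category.id_comp (𝟙 (𝟙_ C))
  rw [dual_nil]
  exact ((eq_whisker (id_tensorHom_id _ _) _).trans (Category.id_comp _)).symm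

theorem EvS_cons (P : C × Bool) (T : List (C × Bool)) :
    EvS (P :: T) = ((dualConsIso P T).hom ⊗ₘ (consIso P T).hom) ≫
      nestPairing (ev1 P) (EvS T) := by
  have cons_id : (dualConsIso P T).hom ⊗ₘ (consIso P T).hom =
      (dualConsIso P T).hom ▷ (sobj P ⊗ XS T) := tensorHom_id _ _
  rw [cons_id]
  rfl

theorem EvS_append (S T : List (C × Bool)) :
    EvS (S ++ T) =
      ((dualSplitIso S T).hom ⊗ₘ (splitIso S T).hom) ≫ nestPairing (EvS S) (EvS T) := by
  induction S with
  | nil =>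
    rw [EvS_nil, nestPairing_tensorHom_comp_left, dualSplitIso_nil_hom, splitIso_nil_hom,
      tensorHom_comp_tensorHom_assoc, Category.assoc, Category.assoc, whiskerLeft_inv_hom,
      inv_hom_whiskerRight, Category.comp_id, Category.comp_id]
    exact (tensorHom_comp_nestPairing_leftUnitor (EvS T)).symm
  | cons P S ih =>
    calc EvS (P :: (S ++ T)) =
          (((dualConsIso P (S ++ T)).hom ≫ (dualSplitIso S T).hom ▷ _ ≫ (α_ _ _ _).hom) ⊗ₘ
            ((consIso P (S ++ T)).hom ≫ sobj P ◁ (splitIso S T).hom ≫ (α_ _ _ _).inv)) ≫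
              nestPairing (nestPairing (ev1 P) (EvS S)) (EvS T) := by
          rw [EvS_cons, ih, nestPairing_tensorHom_comp_right, nestPairing_assoc,
            tensorHom_comp_tensorHom_assoc, tensorHom_comp_tensorHom_assoc, Category.assoc,
            Category.assoc]
      _ = ((dualSplitIso (P :: S) T).hom ⊗ₘ (splitIso (P :: S) T).hom) ≫
            nestPairing (EvS (P :: S)) (EvS T) := by
          rw [dualConsIso_append, EvS_cons, nestPairing_tensorHom_comp_left,
            tensorHom_comp_tensorHom_assoc, splitIso_cons_hom]
          simp only [Category.assoc, inv_hom_whiskerRight, Category.comp_id]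

theorem omegaS_append (S T : List (C × Bool)) (a : 𝟙_ C ⟶ XS (Sstar T) ⊗ XS (Sstar S))
    (b : 𝟙_ C ⟶ XS S ⊗ XS T) :
    omegaS (S ++ T) (a ≫ (dualSplitIso S T).inv) (b ≫ (splitIso S T).inv) =
      (λ_ (𝟙_ C)).inv ≫ (a ⊗ₘ b) ≫ nestPairing (EvS S) (EvS T) := by
  rw [omegaS, EvS_append, tensorHom_comp_tensorHom_assoc, Category.assoc, Category.assoc,
    Iso.inv_hom_id, Iso.inv_hom_id, Category.comp_id, Category.comp_id]

end PivotalCat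

open PivotalCat in
/-- Lemma 2.2: in a spherical pivotal category, for all tuples `S`, `T` of signed objects,
`ω_{TS} ∘ (σ_{X_{T*}, X_{S*}} ⊗ σ_{X_S, X_T}) = ω_{ST}`, under the identifications
`X_{(ST)*} = X_{T*} ⊗ X_{S*}` and `X_{ST} = X_S ⊗ X_T`. -/
theorem spherical_omega_cyclic {C : Type u} [Category.{v} C] [MonoidalCategory C]
    [PivotalCat C] [SphericalCat C] (S T : List (C × Bool))
    (a : 𝟙_ C ⟶ XS (Sstar T) ⊗ XS (Sstar S)) (b : 𝟙_ C ⟶ XS S ⊗ XS T) :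
    omegaS (T ++ S)
      (sigmaMap (XS (Sstar T)) (XS (Sstar S)) a ≫ (splitIso (Sstar S) (Sstar T)).inv ≫
        eqToHom (congrArg XS (Sstar_append T S)).symm)
      (sigmaMap (XS S) (XS T) b ≫ (splitIso T S).inv) =
    omegaS (S ++ T)
      (a ≫ (splitIso (Sstar T) (Sstar S)).inv ≫
        eqToHom (congrArg XS (Sstar_append S T)).symm)
      (b ≫ (splitIso S T).inv) := by
  calc _ = (λ_ (𝟙_ C)).inv ≫ (sigmaMap (XS (Sstar T)) (XS (Sstar S)) a ⊗ₘ
          sigmaMap (XS S) (XS T) b) ≫ nestPairing (EvS T) (EvS S) := omegaS_append T S _ _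
    _ = (λ_ (𝟙_ C)).inv ≫ (a ⊗ₘ b) ≫ nestPairing (EvS S) (EvS T) :=
        sigmaMap_tensorHom_comp_nestPairing (EvS S) (EvS T) a b
    _ = _ := (omegaS_append S T a b).symm
end

section
/- Let C be a pivotal category. For all objects X, Y, Z of C: (a) σ_{X,Y} : Hom(𝟙, X⊗Y) → Hom(𝟙, Y⊗X) is a bijection with inverse σ_{Y,X}; (b) σ_{X,𝟙} = σ_{𝟙,X} = id on Hom(𝟙, X); (c) σ_{X⊗Y,Z} = σ_{Y,Z⊗X} ∘ σ_{X,Y⊗Z} and σ_{X,Y⊗Z} = σ_{Z⊗X,Y} ∘ σ_{X⊗Y,Z}. -/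
open CategoryTheory CategoryTheory.Limits MonoidalCategory

universe v u w

/-!
Both dualities of a pivotal category are exact pairings, and `σ_{X,Y}` rotates a morphism
`𝟙 ⟶ X ⊗ Y` along the cup of the right pairing of `X` and the cap of the left one. Rotating along
the nested cup and cap on `Y* ⊗ X*` is rotating along `X` and then along `Y`; since the left and
right comparison maps `Y* ⊗ X* ⟶ (X ⊗ Y)*` coincide, a single morphism matches the nested cup and
cap with those of `(X ⊗ Y)*`, which gives the first formula of (c). That `σ_{X,𝟙}` is the identity
comes from the coincidence of the left and right duals of a morphism `𝟙 ⟶ X` and of the two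
evaluations of `𝟙`. Taking `Z = 𝟙` in (c) then gives (a), and inverting `σ` by (a) gives
`σ_{𝟙,X} = id` and the second formula of (c).
-/

section Rotation

variable {C : Type u} [Category.{v} C] [MonoidalCategory C]

theorem rightDualIso_hom_comp_evaluation {X Y₁ Y₂ : C} (p₁ : ExactPairing X Y₁)
    (p₂ : ExactPairing X Y₂) :
    (rightDualIso p₁ p₂).hom ▷ X ≫ ε_ X Y₂ = ε_ X Y₁ :=
  (@rightAdjointMate_comp_evaluation C _ _ X X ⟨Y₂⟩ ⟨Y₁⟩ (𝟙 X)).trans (by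
    rw [whiskerLeft_id, Category.id_comp]; rfl)

theorem coevaluation_comp_leftDualIso_hom {X₁ X₂ Y : C} (p₁ : ExactPairing X₁ Y)
    (p₂ : ExactPairing X₂ Y) :
    η_ X₁ Y ≫ (leftDualIso p₁ p₂).hom ▷ Y = η_ X₂ Y :=
  (@coevaluation_comp_leftAdjointMate C _ _ Y Y ⟨X₂⟩ ⟨X₁⟩ (𝟙 Y)).trans (by
    rw [whiskerLeft_id, Category.comp_id]; rfl)

/-- Rotation of a morphism `𝟙 ⟶ X ⊗ Y` to a morphism `𝟙 ⟶ Y ⊗ X`: bend the factor `X` around with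
a cup and a cap on `D ⊗ X`. It generalizes `sigmaMap` in that `D` need not be the chosen dual
of `X`, and the cup and cap need not satisfy any zigzag identity. -/
def rotateAlong {D X Y : C} (cup : 𝟙_ C ⟶ D ⊗ X) (cap : D ⊗ X ⟶ 𝟙_ C) (a : 𝟙_ C ⟶ X ⊗ Y) :
    𝟙_ C ⟶ Y ⊗ X :=
  cup ⊗≫ D ◁ a ▷ X ⊗≫ cap ▷ (Y ⊗ X) ⊗≫ 𝟙 _

theorem rotateAlong_cup_comp_whiskerRight {D D' X Y : C} (m : D ⟶ D') (cup : 𝟙_ C ⟶ D ⊗ X)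
    (cap : D' ⊗ X ⟶ 𝟙_ C) (a : 𝟙_ C ⟶ X ⊗ Y) :
    rotateAlong (cup ≫ m ▷ X) cap a = rotateAlong cup (m ▷ X ≫ cap) a := by
  unfold rotateAlong
  calc
    _ = cup ⊗≫ (m ▷ (𝟙_ C ⊗ X) ≫ D' ◁ (a ▷ X)) ⊗≫ cap ▷ (Y ⊗ X) ⊗≫ 𝟙 _ := by monoidal
    _ = _ := by rw [← whisker_exchange]; monoidal

theorem rotateAlong_comp_whiskerLeft {D X Y Y' : C} (cup : 𝟙_ C ⟶ D ⊗ X) (cap : D ⊗ X ⟶ 𝟙_ C)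
    (a : 𝟙_ C ⟶ X ⊗ Y) (f : Y ⟶ Y') :
    rotateAlong cup cap (a ≫ X ◁ f) = rotateAlong cup cap a ≫ f ▷ X := by
  unfold rotateAlong
  calc
    _ = cup ⊗≫ D ◁ a ▷ X ⊗≫ ((D ⊗ X) ◁ (f ▷ X) ≫ cap ▷ (Y' ⊗ X)) ⊗≫ 𝟙 _ := by monoidal
    _ = _ := by rw [whisker_exchange]; monoidal

theorem rotateAlong_tensor {D E X Y Z : C} (cupX : 𝟙_ C ⟶ D ⊗ X) (capX : D ⊗ X ⟶ 𝟙_ C)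
    (cupY : 𝟙_ C ⟶ E ⊗ Y) (capY : E ⊗ Y ⟶ 𝟙_ C) (a : 𝟙_ C ⟶ (X ⊗ Y) ⊗ Z) :
    rotateAlong (D := E ⊗ D) (cupY ⊗≫ (E ◁ cupX) ▷ Y ⊗≫ 𝟙 _)
        (𝟙 _ ⊗≫ E ◁ (capX ▷ Y) ⊗≫ capY) a =
      rotateAlong cupY capY (rotateAlong cupX capX (a ≫ (α_ X Y Z).hom) ≫ (α_ Y Z X).hom) ≫
        (α_ Z X Y).hom := by
  unfold rotateAlong
  monoidal

end Rotation

namespace PivotalCat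

variable {C : Type u} [Category.{v} C] [MonoidalCategory C] [PivotalCat C]

/-- The left duality of `X`, as an exact pairing of `X` with `dual X`. -/
instance leftPairing (X : C) : ExactPairing X (dual X) where
  coevaluation' := coevl X
  evaluation' := evl X
  coevaluation_evaluation' := by
    rw [← cancel_epi (ρ_ (dual X)).inv, ← cancel_mono (λ_ (dual X)).hom]
    simpa using left_zigzag₂ X
  evaluation_coevaluation' := by
    rw [← cancel_epi (λ_ X).inv, ← cancel_mono (ρ_ X).hom]
    simpa using left_zigzag₁ X

/-- The right duality of `X`, as an exact pairing of `dual X` with `X`. -/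
instance rightPairing (X : C) : ExactPairing (dual X) X where
  coevaluation' := coevr X
  evaluation' := evr X
  coevaluation_evaluation' := by
    rw [← cancel_epi (ρ_ X).inv, ← cancel_mono (λ_ X).hom]
    simpa using right_zigzag₁ X
  evaluation_coevaluation' := by
    rw [← cancel_epi (λ_ (dual X)).inv, ← cancel_mono (ρ_ (dual X)).hom]
    simpa using right_zigzag₂ X

theorem rightDualIso_tensor_hom_eq_mcon (X Y : C) :
    (rightDualIso ExactPairing.tensor (leftPairing (X ⊗ Y))).hom = mcon Y X := by
  change (ρ_ (dual Y ⊗ dual X)).inv ≫ _ ◁ coevl (X ⊗ Y) ≫ _ ◁ 𝟙 (X ⊗ Y) ▷ _ ≫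
    (α_ _ _ _).inv ≫ (𝟙 ((dual Y ⊗ dual X) ⊗ X ⊗ Y) ⊗≫ dual Y ◁ (evl X ▷ Y) ⊗≫ evl Y) ▷ _ ≫
      (λ_ _).hom = _
  unfold mcon
  monoidal

theorem leftDualIso_tensor_hom_eq_mcon (X Y : C) :
    (leftDualIso ExactPairing.tensor (rightPairing (X ⊗ Y))).hom = mcon Y X := by
  change (λ_ (dual Y ⊗ dual X)).inv ≫ coevr (X ⊗ Y) ▷ _ ≫ (_ ◁ 𝟙 (X ⊗ Y)) ▷ _ ≫
    (α_ _ _ _).hom ≫ _ ◁ (𝟙 ((X ⊗ Y) ⊗ dual Y ⊗ dual X) ⊗≫ X ◁ (evr Y ▷ dual X) ⊗≫ evr X) ≫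
      (ρ_ _).hom = _
  rw [mcon, constraint_eq]
  monoidal

theorem mcon_whiskerRight_comp_evl (X Y : C) :
    mcon Y X ▷ (X ⊗ Y) ≫ evl (X ⊗ Y) = ε_ (X ⊗ Y) (dual Y ⊗ dual X) := by
  rw [← rightDualIso_tensor_hom_eq_mcon]
  exact rightDualIso_hom_comp_evaluation _ (leftPairing (X ⊗ Y))

theorem coevaluation_comp_mcon_whiskerRight (X Y : C) :
    η_ (dual Y ⊗ dual X) (X ⊗ Y) ≫ mcon Y X ▷ (X ⊗ Y) = coevr (X ⊗ Y) := by
  rw [← leftDualIso_tensor_hom_eq_mcon]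
  exact coevaluation_comp_leftDualIso_hom _ (rightPairing (X ⊗ Y))

theorem pdual_whiskerRight_comp_evl {X Y : C} (f : X ⟶ Y) :
    pdual f ▷ X ≫ evl X = dual Y ◁ f ≫ evl Y :=
  @rightAdjointMate_comp_evaluation C _ _ X Y ⟨dual X⟩ ⟨dual Y⟩ f

theorem whiskerLeft_pdual_comp_evr {X Y : C} (f : X ⟶ Y) :
    X ◁ pdual f ≫ evr X = f ▷ dual Y ≫ evr Y := by
  rw [pdual, ldual_eq_rdual]
  exact @leftAdjointMate_comp_evaluation C _ _ X Y ⟨dual X⟩ ⟨dual Y⟩ f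

theorem whiskerLeft_comp_evl_eq_whiskerRight_comp_evr {X : C} (b : 𝟙_ C ⟶ X) :
    (ρ_ (dual X)).inv ≫ dual X ◁ b ≫ evl X = (λ_ (dual X)).inv ≫ b ▷ dual X ≫ evr X := by
  calc
    _ = pdual b ≫ (ρ_ (dual (𝟙_ C))).inv ≫ evl (𝟙_ C) := by
      rw [← pdual_whiskerRight_comp_evl, rightUnitor_inv_naturality_assoc]
    _ = pdual b ≫ (λ_ (dual (𝟙_ C))).inv ≫ evr (𝟙_ C) := by rw [ev_unit]
    _ = _ := by rw [← whiskerLeft_pdual_comp_evr, leftUnitor_inv_naturality_assoc]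

theorem sigmaMap_eq_rotateAlong (X Y : C) (a : 𝟙_ C ⟶ X ⊗ Y) :
    sigmaMap X Y a = rotateAlong (coevr X) (evl X) a := by
  unfold sigmaMap rotateAlong
  monoidal

theorem sigmaMap_comp_whiskerLeft {X Y Y' : C} (a : 𝟙_ C ⟶ X ⊗ Y) (f : Y ⟶ Y') :
    sigmaMap X Y' (a ≫ X ◁ f) = sigmaMap X Y a ≫ f ▷ X := by
  simp only [sigmaMap_eq_rotateAlong, rotateAlong_comp_whiskerLeft]

theorem sigmaMap_tensor_left (X Y Z : C) (a : 𝟙_ C ⟶ (X ⊗ Y) ⊗ Z) :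
    sigmaMap (X ⊗ Y) Z a =
      sigmaMap Y (Z ⊗ X) (sigmaMap X (Y ⊗ Z) (a ≫ (α_ X Y Z).hom) ≫ (α_ Y Z X).hom) ≫
        (α_ Z X Y).hom := by
  simp only [sigmaMap_eq_rotateAlong]
  rw [← coevaluation_comp_mcon_whiskerRight, rotateAlong_cup_comp_whiskerRight,
    mcon_whiskerRight_comp_evl]
  exact rotateAlong_tensor (coevr X) (evl X) (coevr Y) (evl Y) a

theorem sigmaMap_unit_right (X : C) (a : 𝟙_ C ⟶ X ⊗ 𝟙_ C) :
    sigmaMap X (𝟙_ C) a = a ≫ (ρ_ X).hom ≫ (λ_ X).inv := by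
  obtain ⟨b, rfl⟩ : ∃ b : 𝟙_ C ⟶ X, a = b ≫ (ρ_ X).inv := ⟨a ≫ (ρ_ X).hom, by simp⟩
  unfold sigmaMap
  calc
    _ = coevr X ≫ ((ρ_ (dual X)).inv ≫ dual X ◁ b ≫ evl X) ▷ X := by monoidal
    _ = 𝟙 _ ⊗≫ (𝟙_ C ◁ coevr X ≫ b ▷ (dual X ⊗ X)) ⊗≫ evr X ▷ X := by
      rw [whiskerLeft_comp_evl_eq_whiskerRight_comp_evr]; monoidal
    _ = b ⊗≫ (X ◁ coevr X ⊗≫ evr X ▷ X) := by rw [whisker_exchange]; monoidal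
    _ = b ⊗≫ (⊗𝟙.hom : X ⊗ 𝟙_ C ⟶ 𝟙_ C ⊗ X) := by
      rw [← ExactPairing.coevaluation_evaluation'' (dual X) X]; rfl
    _ = _ := by monoidal

theorem sigmaMap_sigmaMap (X Y : C) (a : 𝟙_ C ⟶ X ⊗ Y) : sigmaMap Y X (sigmaMap X Y a) = a := by
  have rotate_unit := sigmaMap_tensor_left X Y (𝟙_ C) (a ≫ (ρ_ (X ⊗ Y)).inv)
  have first_factor : sigmaMap X (Y ⊗ 𝟙_ C) ((a ≫ (ρ_ (X ⊗ Y)).inv) ≫ (α_ X Y (𝟙_ C)).hom) =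
      sigmaMap X Y a ≫ (ρ_ Y).inv ▷ X := by
    rw [← sigmaMap_comp_whiskerLeft]; congr 1; monoidal
  have second_factor :
      sigmaMap Y (𝟙_ C ⊗ X) ((sigmaMap X Y a ≫ (ρ_ Y).inv ▷ X) ≫ (α_ Y (𝟙_ C) X).hom) =
        sigmaMap Y X (sigmaMap X Y a) ≫ (λ_ X).inv ▷ Y := by
    rw [← sigmaMap_comp_whiskerLeft (sigmaMap X Y a)]; congr 1; monoidal
  rw [sigmaMap_unit_right, first_factor, second_factor] at rotate_unit
  simpa using (rotate_unit =≫ (λ_ (X ⊗ Y)).hom).symm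

theorem sigmaMap_unit_left (X : C) (a : 𝟙_ C ⟶ 𝟙_ C ⊗ X) :
    sigmaMap (𝟙_ C) X a = a ≫ (λ_ X).hom ≫ (ρ_ X).inv := by
  simpa [sigmaMap_unit_right] using sigmaMap_sigmaMap X (𝟙_ C) (a ≫ (λ_ X).hom ≫ (ρ_ X).inv)

theorem sigmaMap_tensor_right (X Y Z : C) (a : 𝟙_ C ⟶ X ⊗ (Y ⊗ Z)) :
    sigmaMap X (Y ⊗ Z) a =
      sigmaMap (Z ⊗ X) Y (sigmaMap (X ⊗ Y) Z (a ≫ (α_ X Y Z).inv) ≫ (α_ Z X Y).inv) ≫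
        (α_ Y Z X).inv := by
  rw [sigmaMap_tensor_left Z X Y]
  simp [sigmaMap_sigmaMap]

end PivotalCat

open PivotalCat in
/-- Lemma 2.1 (properties of the permutation maps `σ_{X,Y}`):
(a) `σ_{X,Y}` is a bijection with inverse `σ_{Y,X}`;
(b) `σ_{X,𝟙} = σ_{𝟙,X} = id` (under the unitor identifications);
(c) `σ_{X⊗Y,Z} = σ_{Y,Z⊗X} ∘ σ_{X,Y⊗Z}` and `σ_{X,Y⊗Z} = σ_{Z⊗X,Y} ∘ σ_{X⊗Y,Z}`
(under the associator identifications). -/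
theorem sigmaMap_permutation_properties {C : Type u} [Category.{v} C] [MonoidalCategory C]
    [PivotalCat C] (X Y Z : C) :
    (∀ a : 𝟙_ C ⟶ X ⊗ Y, sigmaMap Y X (sigmaMap X Y a) = a) ∧
    (∀ a : 𝟙_ C ⟶ Y ⊗ X, sigmaMap X Y (sigmaMap Y X a) = a) ∧
    (∀ a : 𝟙_ C ⟶ X ⊗ 𝟙_ C, sigmaMap X (𝟙_ C) a = a ≫ (ρ_ X).hom ≫ (λ_ X).inv) ∧
    (∀ a : 𝟙_ C ⟶ 𝟙_ C ⊗ X, sigmaMap (𝟙_ C) X a = a ≫ (λ_ X).hom ≫ (ρ_ X).inv) ∧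
    (∀ a : 𝟙_ C ⟶ (X ⊗ Y) ⊗ Z,
      sigmaMap (X ⊗ Y) Z a =
        sigmaMap Y (Z ⊗ X) (sigmaMap X (Y ⊗ Z) (a ≫ (α_ X Y Z).hom) ≫ (α_ Y Z X).hom) ≫
          (α_ Z X Y).hom) ∧
    (∀ a : 𝟙_ C ⟶ X ⊗ (Y ⊗ Z),
      sigmaMap X (Y ⊗ Z) a =
        sigmaMap (Z ⊗ X) Y (sigmaMap (X ⊗ Y) Z (a ≫ (α_ X Y Z).inv) ≫ (α_ Z X Y).inv) ≫
          (α_ Y Z X).inv) := by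
  exact ⟨sigmaMap_sigmaMap X Y, sigmaMap_sigmaMap Y X, sigmaMap_unit_right X, sigmaMap_unit_left X,
    sigmaMap_tensor_left X Y Z, sigmaMap_tensor_right X Y Z⟩
end
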